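/- For ε = (ε₄,ε₅,ε₆,ε₇) ∈ {0, ½}⁴ let C_ε = { x ∈ T⁷ : x₄ = ε₄, x₅ = ε₅, x₆ = ε₆, x₇ = ε₇ } be the corresponding component 3-torus of the fixed point set of α. Then β maps C_{(ε₄,ε₅,ε₆,ε₇)} bijectively onto C_{(ε₄,ε₅,ε₆+½,ε₇)} and γ maps C_{(ε₄,ε₅,ε₆,ε₇)} bijectively onto C_{(ε₄,ε₅+½,ε₆,ε₇+½)}. Consequently the induced action of the group generated by β and γ on the 16 components C_ε is free and has exactly 4 orbits. -/

import Mathlib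

/-- The 7-torus `T⁷ = (ℝ/ℤ)⁷`. -/
abbrev T7 : Type := Fin 7 → AddCircle (1 : ℝ)

/-- The element `½ ∈ ℝ/ℤ`. -/
noncomputable def half : AddCircle (1 : ℝ) := ((1 / 2 : ℝ) : AddCircle (1 : ℝ))

/-- `α(x) = (x₁, x₂, x₃, −x₄, −x₅, −x₆, −x₇)` on `T⁷` (with 0-based indexing). -/
noncomputable def tα : T7 → T7 := fun x => ![x 0, x 1, x 2, -x 3, -x 4, -x 5, -x 6]

/-- `β(x) = (x₁, −x₂, −x₃, x₄, x₅, ½−x₆, −x₇)` on `T⁷` (with 0-based indexing). -/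
noncomputable def tβ : T7 → T7 := fun x => ![x 0, -x 1, -x 2, x 3, x 4, half - x 5, -x 6]

/-- `γ(x) = (−x₁, x₂, −x₃, x₄, ½−x₅, x₆, ½−x₇)` on `T⁷` (with 0-based indexing). -/
noncomputable def tγ : T7 → T7 := fun x => ![-x 0, x 1, -x 2, x 3, half - x 4, x 5, half - x 6]

lemma tα_invol : Function.Involutive tα := by
  intro x; funext i
  fin_cases i
  · rfl
  · rfl
  · rfl
  · exact neg_neg _
  · exact neg_neg _
  · exact neg_neg _
  · exact neg_neg _

lemma tβ_invol : Function.Involutive tβ := by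
  intro x; funext i
  fin_cases i
  · rfl
  · exact neg_neg _
  · exact neg_neg _
  · rfl
  · rfl
  · exact sub_sub_cancel _ _
  · exact neg_neg _

lemma tγ_invol : Function.Involutive tγ := by
  intro x; funext i
  fin_cases i
  · exact neg_neg _
  · rfl
  · exact neg_neg _
  · rfl
  · exact sub_sub_cancel _ _
  · rfl
  · exact sub_sub_cancel _ _

/-- `α` as a bijection (element of the group of bijections) of `T⁷`. -/
noncomputable def pα : Equiv.Perm T7 := Function.Involutive.toPerm tα tα_invol

/-- `β` as a bijection (element of the group of bijections) of `T⁷`. -/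
noncomputable def pβ : Equiv.Perm T7 := Function.Involutive.toPerm tβ tβ_invol

/-- `γ` as a bijection (element of the group of bijections) of `T⁷`. -/
noncomputable def pγ : Equiv.Perm T7 := Function.Involutive.toPerm tγ tγ_invol

/-- The set of tuples `(ε₄,ε₅,ε₆,ε₇) ∈ {0,½}⁴`. -/
noncomputable def E4 : Set (Fin 4 → AddCircle (1 : ℝ)) := {e | ∀ i, e i = 0 ∨ e i = half}

/-- The component 3-torus `C_ε = {x ∈ T⁷ : x₄ = ε₄, x₅ = ε₅, x₆ = ε₆, x₇ = ε₇}` of the fixed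
point set of `α` (0-based indices 3,4,5,6). -/
def Ctor (ε : Fin 4 → AddCircle (1 : ℝ)) : Set T7 :=
  {x | x 3 = ε 0 ∧ x 4 = ε 1 ∧ x 5 = ε 2 ∧ x 6 = ε 3}

/-!
On `{0, ½}⁴` negation is the identity, so on the components `C_ε` the maps `β` and `γ` act as the
translations of `ε` by `(0, 0, ½, 0)` and `(0, ½, 0, ½)`. They are commuting involutions, hence
generate `{1, β, γ, βγ}`, and the three translations belonging to `β`, `γ` and `βγ` are nonzero:
the action on components is free, and a group of order `4` acting freely on `16` components has
`16 / 4 = 4` orbits.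
-/

open MulAction
open scoped Pointwise

section Group

variable {G : Type*} [Group G]

lemma zpow_eq_one_or_eq_self {a : G} (ha : a * a = 1) (m : ℤ) : a ^ m = 1 ∨ a ^ m = a := by
  obtain ⟨k, rfl | rfl⟩ := m.even_or_odd'
  · simp [zpow_mul, zpow_ofNat, pow_two, ha]
  · simp [zpow_add, zpow_mul, zpow_ofNat, pow_two, ha]

variable {a b : G}

lemma mem_closure_pair_iff_of_commute (hab : Commute a b) {g : G} :
    g ∈ Subgroup.closure {a, b} ↔ ∃ m n : ℤ, a ^ m * b ^ n = g := by
  constructor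
  · intro hg
    induction hg using Subgroup.closure_induction with
    | mem x hx =>
      obtain rfl | rfl := hx
      · exact ⟨1, 0, by simp⟩
      · exact ⟨0, 1, by simp⟩
    | one => exact ⟨0, 0, by simp⟩
    | mul x y _ _ hx hy =>
      obtain ⟨m, n, rfl⟩ := hx
      obtain ⟨m', n', rfl⟩ := hy
      exact ⟨m + m', n + n', by
        rw [zpow_add, zpow_add, (hab.zpow_zpow m' n).symm.mul_mul_mul_comm]⟩
    | inv x _ hx =>
      obtain ⟨m, n, rfl⟩ := hx
      exact ⟨-m, -n, by rw [(hab.zpow_zpow m n).mul_inv, zpow_neg, zpow_neg]⟩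
  · rintro ⟨m, n, rfl⟩
    exact mul_mem (zpow_mem (Subgroup.subset_closure (by simp)) m)
      (zpow_mem (Subgroup.subset_closure (by simp)) n)

lemma coe_closure_pair_of_mul_self (ha : a * a = 1) (hb : b * b = 1) (hab : Commute a b) :
    (Subgroup.closure {a, b} : Set G) = {1, a, b, a * b} := by
  ext g
  rw [SetLike.mem_coe, mem_closure_pair_iff_of_commute hab]
  constructor
  · rintro ⟨m, n, rfl⟩
    rcases zpow_eq_one_or_eq_self ha m with hm | hm <;>
      rcases zpow_eq_one_or_eq_self hb n with hn | hn <;> simp [hm, hn]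
  · rintro (rfl | rfl | rfl | rfl)
    exacts [⟨0, 0, by simp⟩, ⟨1, 0, by simp⟩, ⟨0, 1, by simp⟩, ⟨1, 1, by simp⟩]

lemma card_closure_pair_of_mul_self (ha : a * a = 1) (hb : b * b = 1) (hab : Commute a b)
    (ha_one : a ≠ 1) (hb_one : b ≠ 1) (hne : a ≠ b) :
    Nat.card (Subgroup.closure {a, b}) = 4 := by
  classical
  have hmul : a * b ≠ 1 := fun h => hne (mul_right_cancel (h.trans hb.symm))
  have hcoe : (Subgroup.closure {a, b} : Set G) = ({1, a, b, a * b} : Finset G) := by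
    simpa using coe_closure_pair_of_mul_self ha hb hab
  rw [← SetLike.coe_sort_coe, hcoe, Nat.card_coe_set_eq, Set.ncard_coe_finset]
  simp [ha_one.symm, hb_one.symm, hne, hmul.symm, ha_one, hb_one]

variable {X : Type*} [MulAction G X]

lemma orbit_subgroup_eq (H : Subgroup G) (x : X) : orbit H x = {y | ∃ g ∈ H, y = g • x} := by
  ext y
  simp [mem_orbit_iff, Subgroup.smul_def, eq_comm]

lemma ncard_image_orbit_mul_card {S : Set X}
    (hS : ∀ g : G, ∀ x ∈ S, g • x ∈ S) (hfree : ∀ g : G, ∀ x ∈ S, g • x = x → g = 1) :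
    (orbit G '' S).ncard * Nat.card G = S.ncard := by
  choose rep hrep_mem hrep using fun O : orbit G '' S => O.2
  let f : (orbit G '' S) × G → S := fun p => ⟨p.2 • rep p.1, hS _ _ (hrep_mem p.1)⟩
  have hf : f.Bijective := by
    constructor
    · rintro ⟨O, g⟩ ⟨O', g'⟩ h
      have h : g • rep O = g' • rep O' := congrArg Subtype.val h
      obtain rfl : O = O' := by
        rw [Subtype.ext_iff, ← hrep O, ← hrep O', ← orbit_smul g, h, orbit_smul]
      have hg : g'⁻¹ * g = 1 := hfree _ _ (hrep_mem O) (by rw [mul_smul, h, inv_smul_smul])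
      rw [inv_mul_eq_one.mp hg]
    · rintro ⟨x, hx⟩
      have hx_mem : x ∈ orbit G (rep ⟨orbit G x, x, hx, rfl⟩) := by
        rw [hrep]
        exact mem_orbit_self x
      obtain ⟨g, hg⟩ := hx_mem
      exact ⟨(_, g), Subtype.ext hg⟩
  rw [← Nat.card_coe_set_eq, ← Nat.card_coe_set_eq, ← Nat.card_prod,
    Nat.card_eq_of_bijective f hf]

end Group

lemma addOrderOf_half : addOrderOf half = 2 := by
  simpa [half] using AddCircle.addOrderOf_period_div (p := (1 : ℝ)) two_pos

lemma half_add_half : half + half = 0 := by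
  rw [← two_nsmul, ← addOrderOf_half, addOrderOf_nsmul_eq_zero]

lemma neg_half_eq_half : -half = half := neg_eq_of_add_eq_zero_left half_add_half

lemma half_ne_zero : half ≠ 0 := by
  rw [Ne, ← AddMonoid.addOrderOf_eq_one_iff, addOrderOf_half]
  decide

section Components

variable {ε δ : Fin 4 → AddCircle (1 : ℝ)}

lemma add_mem_E4 (hε : ε ∈ E4) (hδ : δ ∈ E4) : ε + δ ∈ E4 := by
  intro i
  rcases hε i with h | h <;> rcases hδ i with h' | h' <;> simp [h, h', half_add_half]

lemma neg_eq_self_of_mem_E4 (hε : ε ∈ E4) : -ε = ε := by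
  ext i
  rcases hε i with h | h <;> simp [h, neg_half_eq_half]

lemma ncard_E4 : E4.ncard = 16 := by
  classical
  have hE4 : E4 = (Fintype.piFinset fun _ => {0, half} : Finset (Fin 4 → AddCircle (1 : ℝ))) := by
    ext ε
    simp [E4]
  rw [hE4, Set.ncard_coe_finset, Fintype.card_piFinset_const,
    Finset.card_pair half_ne_zero.symm]
  norm_num

lemma Ctor_injective : Function.Injective Ctor := by
  intro ε δ h
  have hmem : (![0, 0, 0, ε 0, ε 1, ε 2, ε 3] : T7) ∈ Ctor δ := h ▸ ⟨rfl, rfl, rfl, rfl⟩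
  obtain ⟨h0, h1, h2, h3⟩ := hmem
  ext i
  fin_cases i
  exacts [h0, h1, h2, h3]

lemma bijOn_Ctor_add_of_involutive {f : T7 → T7} (hf : f.Involutive) (hδ : δ ∈ E4)
    (hmaps : ∀ ε ∈ E4, Set.MapsTo f (Ctor ε) (Ctor (ε + δ))) (hε : ε ∈ E4) :
    Set.BijOn f (Ctor ε) (Ctor (ε + δ)) := by
  have hback : Set.MapsTo f (Ctor (ε + δ)) (Ctor ε) := by
    have hcancel : ε + δ + δ = ε := by
      nth_rewrite 2 [← neg_eq_self_of_mem_E4 hδ]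
      exact add_neg_cancel_right ε δ
    simpa only [hcancel] using hmaps (ε + δ) (add_mem_E4 hε hδ)
  exact Set.InvOn.bijOn ⟨fun x _ => hf x, fun x _ => hf x⟩ (hmaps ε hε) hback

/-- The translation by which `β` permutes the components: `β` maps `C_ε` onto `C_(ε + shiftβ)`. -/
noncomputable def shiftβ : Fin 4 → AddCircle (1 : ℝ) := ![0, 0, half, 0]

/-- The translation by which `γ` permutes the components: `γ` maps `C_ε` onto `C_(ε + shiftγ)`. -/
noncomputable def shiftγ : Fin 4 → AddCircle (1 : ℝ) := ![0, half, 0, half]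

lemma shiftβ_mem_E4 : shiftβ ∈ E4 := by
  intro i
  fin_cases i <;> simp [shiftβ]

lemma shiftγ_mem_E4 : shiftγ ∈ E4 := by
  intro i
  fin_cases i <;> simp [shiftγ]

lemma shiftβ_ne_zero : shiftβ ≠ 0 := fun h => half_ne_zero (congrFun h 2)

lemma shiftγ_ne_zero : shiftγ ≠ 0 := fun h => half_ne_zero (congrFun h 3)

lemma shiftγ_add_shiftβ_ne_zero : shiftγ + shiftβ ≠ 0 := fun h =>
  half_ne_zero (by simpa [shiftβ, shiftγ] using congrFun h 3)

lemma add_shiftβ : ε + shiftβ = ![ε 0, ε 1, ε 2 + half, ε 3] := by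
  ext i
  fin_cases i <;> simp [shiftβ]

lemma add_shiftγ : ε + shiftγ = ![ε 0, ε 1 + half, ε 2, ε 3 + half] := by
  ext i
  fin_cases i <;> simp [shiftγ]

lemma mapsTo_tβ_Ctor (hε : ε ∈ E4) : Set.MapsTo tβ (Ctor ε) (Ctor (ε + shiftβ)) := by
  have hneg (i) : -ε i = ε i := congrFun (neg_eq_self_of_mem_E4 hε) i
  rintro x ⟨h0, h1, h2, h3⟩
  simp [Ctor, tβ, shiftβ, h0, h1, h2, h3, hneg, sub_eq_add_neg, add_comm half]

lemma mapsTo_tγ_Ctor (hε : ε ∈ E4) : Set.MapsTo tγ (Ctor ε) (Ctor (ε + shiftγ)) := by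
  have hneg (i) : -ε i = ε i := congrFun (neg_eq_self_of_mem_E4 hε) i
  rintro x ⟨h0, h1, h2, h3⟩
  simp [Ctor, tγ, shiftγ, h0, h1, h2, h3, hneg, sub_eq_add_neg, add_comm half]

lemma bijOn_tβ_Ctor (hε : ε ∈ E4) : Set.BijOn tβ (Ctor ε) (Ctor (ε + shiftβ)) :=
  bijOn_Ctor_add_of_involutive tβ_invol shiftβ_mem_E4 (fun _ => mapsTo_tβ_Ctor) hε

lemma bijOn_tγ_Ctor (hε : ε ∈ E4) : Set.BijOn tγ (Ctor ε) (Ctor (ε + shiftγ)) :=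
  bijOn_Ctor_add_of_involutive tγ_invol shiftγ_mem_E4 (fun _ => mapsTo_tγ_Ctor) hε

lemma pβ_smul_Ctor (hε : ε ∈ E4) : pβ • Ctor ε = Ctor (ε + shiftβ) :=
  (bijOn_tβ_Ctor hε).image_eq

lemma pγ_smul_Ctor (hε : ε ∈ E4) : pγ • Ctor ε = Ctor (ε + shiftγ) :=
  (bijOn_tγ_Ctor hε).image_eq

lemma pβ_mul_pγ_smul_Ctor (hε : ε ∈ E4) :
    (pβ * pγ) • Ctor ε = Ctor (ε + (shiftγ + shiftβ)) := by
  rw [mul_smul, pγ_smul_Ctor hε, pβ_smul_Ctor (add_mem_E4 hε shiftγ_mem_E4), add_assoc]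

lemma pβ_mul_self : pβ * pβ = 1 := Equiv.ext tβ_invol

lemma pγ_mul_self : pγ * pγ = 1 := Equiv.ext tγ_invol

lemma commute_pβ_pγ : Commute pβ pγ := by
  refine Equiv.ext fun x => ?_
  change tβ (tγ x) = tγ (tβ x)
  ext i
  fin_cases i <;> simp [tβ, tγ, sub_eq_add_neg, neg_half_eq_half, add_comm]

/-- The group generated by `β` and `γ`. -/
abbrev groupβγ : Subgroup (Equiv.Perm T7) := Subgroup.closure {pβ, pγ}

lemma card_groupβγ : Nat.card groupβγ = 4 := by
  refine card_closure_pair_of_mul_self pβ_mul_self pγ_mul_self commute_pβ_pγ ?_ ?_ ?_ <;>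
    intro h
  · exact half_ne_zero (by simpa [pβ, tβ] using congrFun (DFunLike.congr_fun h 0) 5)
  · exact half_ne_zero (by simpa [pγ, tγ] using congrFun (DFunLike.congr_fun h 0) 4)
  · exact half_ne_zero (by simpa [pβ, tβ, pγ, tγ] using congrFun (DFunLike.congr_fun h 0) 5)

variable {g : Equiv.Perm T7}

lemma exists_smul_Ctor_eq_Ctor_add (hg : g ∈ groupβγ) :
    ∃ δ ∈ E4, (∀ ε ∈ E4, g • Ctor ε = Ctor (ε + δ)) ∧ (δ = 0 → g = 1) := by
  have hg' : g ∈ ({1, pβ, pγ, pβ * pγ} : Set (Equiv.Perm T7)) :=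
    (coe_closure_pair_of_mul_self pβ_mul_self pγ_mul_self commute_pβ_pγ).subset hg
  obtain rfl | rfl | rfl | rfl := hg'
  · exact ⟨0, fun _ => .inl rfl, fun ε _ => by rw [one_smul, add_zero], fun _ => rfl⟩
  · exact ⟨shiftβ, shiftβ_mem_E4, fun _ => pβ_smul_Ctor, fun h => absurd h shiftβ_ne_zero⟩
  · exact ⟨shiftγ, shiftγ_mem_E4, fun _ => pγ_smul_Ctor, fun h => absurd h shiftγ_ne_zero⟩
  · exact ⟨shiftγ + shiftβ, add_mem_E4 shiftγ_mem_E4 shiftβ_mem_E4,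
      fun _ => pβ_mul_pγ_smul_Ctor, fun h => absurd h shiftγ_add_shiftβ_ne_zero⟩

lemma smul_Ctor_mem_image_Ctor (hg : g ∈ groupβγ) (hε : ε ∈ E4) :
    g • Ctor ε ∈ Ctor '' E4 := by
  obtain ⟨δ, hδ, hsmul, -⟩ := exists_smul_Ctor_eq_Ctor_add hg
  exact ⟨ε + δ, add_mem_E4 hε hδ, (hsmul ε hε).symm⟩

lemma eq_one_of_smul_Ctor_eq (hg : g ∈ groupβγ) (hε : ε ∈ E4) (h : g • Ctor ε = Ctor ε) :
    g = 1 := by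
  obtain ⟨δ, -, hsmul, hδ⟩ := exists_smul_Ctor_eq_Ctor_add hg
  exact hδ (add_eq_left.mp (Ctor_injective ((hsmul ε hε).symm.trans h)))

lemma ncard_orbits_groupβγ : (orbit groupβγ '' (Ctor '' E4)).ncard = 4 := by
  have hcount : (orbit groupβγ '' (Ctor '' E4)).ncard * Nat.card groupβγ =
      (Ctor '' E4).ncard := by
    apply ncard_image_orbit_mul_card
    · rintro ⟨g, hg⟩ _ ⟨ε, hε, rfl⟩
      exact smul_Ctor_mem_image_Ctor hg hε
    · rintro ⟨g, hg⟩ _ ⟨ε, hε, rfl⟩ h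
      exact Subtype.ext (eq_one_of_smul_Ctor_eq hg hε h)
  rw [card_groupβγ, Set.ncard_image_of_injective _ Ctor_injective, ncard_E4] at hcount
  lia

end Components

/-- `β` maps `C_{(ε₄,ε₅,ε₆,ε₇)}` bijectively onto `C_{(ε₄,ε₅,ε₆+½,ε₇)}` and `γ` maps
`C_{(ε₄,ε₅,ε₆,ε₇)}` bijectively onto `C_{(ε₄,ε₅+½,ε₆,ε₇+½)}`; consequently the induced action
of the group generated by `β` and `γ` on the 16 components `C_ε` is free and has exactly
4 orbits. -/
theorem statement11 :
    (∀ ε ∈ E4, Set.BijOn tβ (Ctor ε) (Ctor ![ε 0, ε 1, ε 2 + half, ε 3])) ∧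
    (∀ ε ∈ E4, Set.BijOn tγ (Ctor ε) (Ctor ![ε 0, ε 1 + half, ε 2, ε 3 + half])) ∧
    (∀ g ∈ (Subgroup.closure {pβ, pγ} : Subgroup (Equiv.Perm T7)),
      (∃ ε ∈ E4, (⇑g) '' Ctor ε = Ctor ε) → g = 1) ∧
    Set.ncard {O : Set (Set T7) | ∃ ε ∈ E4,
      O = {S | ∃ g ∈ (Subgroup.closure {pβ, pγ} : Subgroup (Equiv.Perm T7)),
        S = (⇑g) '' Ctor ε}} = 4 := by
  refine ⟨fun ε hε => add_shiftβ ▸ bijOn_tβ_Ctor hε, fun ε hε => add_shiftγ ▸ bijOn_tγ_Ctor hε,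
    fun g hg ⟨ε, hε, h⟩ => eq_one_of_smul_Ctor_eq hg hε h, ?_⟩
  have horbits : {O : Set (Set T7) | ∃ ε ∈ E4,
      O = {S | ∃ g ∈ groupβγ, S = (⇑g) '' Ctor ε}} = orbit groupβγ '' (Ctor '' E4) := by
    ext O
    simp only [orbit_subgroup_eq, Set.mem_ofPred_eq, Set.mem_image, exists_exists_and_eq_and]
    exact exists_congr fun ε => and_congr_right fun _ => eq_comm
  exact horbits ▸ ncard_orbits_groupβγ
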